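/- Let A_1 = (Q,R_1,V_1,V_1',f_1) and A_2 = (Q,R_2,V_2,V_2',f_2) be two one-dimensional stochastic cellular automata with the same state set Q and explicit global functions F_1, F_2, neither of which is deterministic (for each i there exist c, s, s' with F_i(c,s) ≠ F_i(c,s')). If S_{F_1}(c) = S_{F_2}(c) for every configuration c ∈ Q^ℤ, then |R_1| and |R_2| have a common prime factor: there exists a prime p with p ∣ |R_1| and p ∣ |R_2|. -/

import Mathlib

open MeasureTheory

/-- A one-dimensional stochastic cellular automaton (SCA): states `Q`, random symbols `R`,
two finite neighbourhoods `V, V' ⊆ ℤ` and a local transition function `f`. -/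
structure SCA (Q R : Type*) where
  V : Finset ℤ
  V' : Finset ℤ
  f : (V → Q) → (V' → R) → Q

namespace SCA

variable {Q R : Type*}

/-- The explicit global function `F : Q^ℤ × R^ℤ → Q^ℤ` of an SCA. -/
def F (A : SCA Q R) (c : ℤ → Q) (s : ℤ → R) : ℤ → Q :=
  fun z => A.f (fun v => c (z + (v : ℤ))) (fun v => s (z + (v : ℤ)))

/-- The `t`-th iterate of the explicit global function:
`F^0(c) = c` and `F^{t+1}(c, s¹, …, s^{t+1}) = F (F^t(c, s¹, …, s^t), s^{t+1})`. -/
def iter (A : SCA Q R) : (t : ℕ) → (ℤ → Q) → (Fin t → (ℤ → R)) → (ℤ → Q)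
  | 0, c, _ => c
  | t + 1, c, s => A.F (A.iter t c fun i => s i.castSucc) (s (Fin.last t))

end SCA

/-- `ν` is the uniform product (Bernoulli) probability measure on `ℤ → R`:
a probability measure giving each finite cylinder its uniform probability. -/
def IsUniformProduct {R : Type*} [Fintype R] [MeasurableSpace R]
    (ν : Measure (ℤ → R)) : Prop :=
  IsProbabilityMeasure ν ∧
    ∀ (t : Finset ℤ) (g : ℤ → R),
      ν {s | ∀ i ∈ t, s i = g i} = (Fintype.card R : ENNReal)⁻¹ ^ t.card

/-!
A single cell of `F(c, ·)` depends on finitely many independent uniform symbols, so its law is the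
image of the uniform measure on `R ^ V'`, and the probability of each state is a fraction with
denominator `|R| ^ |V'|`. If the law is not a point mass, some such probability lies strictly
between `0` and `1`; it cannot be written both over a power of `|R₁|` and over a power of `|R₂|`
if these cardinalities are coprime.
-/

open ProbabilityTheory

section UniformOn

variable {Ω Ω₁ Ω₂ : Type*}
  [Fintype Ω] [MeasurableSpace Ω] [MeasurableSingletonClass Ω]
  [Fintype Ω₁] [MeasurableSpace Ω₁] [MeasurableSingletonClass Ω₁]
  [Fintype Ω₂] [MeasurableSpace Ω₂] [MeasurableSingletonClass Ω₂]

lemma uniformOn_univ_real_eq_ncard_div (S : Set Ω) :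
    (uniformOn Set.univ).real S = S.ncard / Fintype.card Ω := by
  rw [Measure.real, uniformOn_univ, Measure.count_apply S.toFinite.measurableSet,
    ← S.toFinite.cast_ncard_eq]
  simp only [ENat.toENNReal_coe, ENNReal.toReal_div, ENNReal.toReal_natCast]

lemma not_coprime_card_of_uniformOn_univ_eq [Nonempty Ω₂] {S₁ : Set Ω₁} {S₂ : Set Ω₂}
    (hne : S₁.Nonempty) (huniv : S₁ ≠ Set.univ)
    (heq : uniformOn Set.univ S₁ = uniformOn Set.univ S₂) :
    ¬ (Fintype.card Ω₁).Coprime (Fintype.card Ω₂) := by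
  intro hcop
  have : Nonempty Ω₁ := hne.to_type
  have cross_mul : S₁.ncard * Fintype.card Ω₂ = S₂.ncard * Fintype.card Ω₁ := by
    have hreal := congrArg ENNReal.toReal heq
    rw [← Measure.real, ← Measure.real, uniformOn_univ_real_eq_ncard_div,
      uniformOn_univ_real_eq_ncard_div, div_eq_div_iff (by simp) (by simp)] at hreal
    exact_mod_cast hreal
  have card_dvd : Fintype.card Ω₁ ∣ S₁.ncard :=
    hcop.dvd_of_dvd_mul_right (Dvd.intro_left _ cross_mul.symm)
  have ncard_lt : S₁.ncard < Fintype.card Ω₁ := by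
    simpa only [Nat.card_eq_fintype_card] using Set.ncard_lt_card huniv
  exact ncard_lt.not_ge (Nat.le_of_dvd hne.ncard_pos card_dvd)

lemma not_coprime_card_of_map_uniformOn_univ_eq [Nonempty Ω₂]
    {Q : Type*} [MeasurableSpace Q] [MeasurableSingletonClass Q]
    {X₁ : Ω₁ → Q} {X₂ : Ω₂ → Q} {a b : Ω₁} (hab : X₁ a ≠ X₁ b)
    (heq : (uniformOn Set.univ).map X₁ = (uniformOn Set.univ).map X₂) :
    ¬ (Fintype.card Ω₁).Coprime (Fintype.card Ω₂) := by
  have fiber_nonempty : (X₁ ⁻¹' {X₁ a}).Nonempty := ⟨a, rfl⟩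
  have fiber_ne_univ : X₁ ⁻¹' {X₁ a} ≠ Set.univ :=
    fun h ↦ hab (Set.eq_univ_iff_forall.mp h b).symm
  refine not_coprime_card_of_uniformOn_univ_eq (S₂ := X₂ ⁻¹' {X₁ a})
    fiber_nonempty fiber_ne_univ ?_
  rw [← Measure.map_apply (measurable_of_finite X₁) (measurableSet_singleton _), heq,
    Measure.map_apply (measurable_of_finite X₂) (measurableSet_singleton _)]

end UniformOn

namespace IsUniformProduct

variable {R : Type*} [Fintype R] [MeasurableSpace R] {ν : Measure (ℤ → R)}

lemma nonempty_alphabet (h : IsUniformProduct ν) : Nonempty R :=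
  have := h.1
  (nonempty_of_isProbabilityMeasure ν).map (· 0)

lemma map_comp_eq_uniformOn_univ [MeasurableSingletonClass R] (h : IsUniformProduct ν)
    {ι : Type*} [Finite ι] {e : ι → ℤ} (he : e.Injective) :
    ν.map (· ∘ e) = uniformOn Set.univ := by
  classical
  have := Fintype.ofFinite ι
  have : Nonempty R := h.nonempty_alphabet
  refine Measure.ext_of_singleton fun g ↦ ?_
  let g' : ℤ → R := Function.extend e g (Classical.arbitrary _)
  have cylinder_eq : (· ∘ e) ⁻¹' {g} = {s : ℤ → R | ∀ i ∈ Finset.univ.image e, s i = g' i} := by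
    ext s
    simp [g', funext_iff, he.extend_apply]
  rw [Measure.map_apply (by fun_prop) (measurableSet_singleton g), cylinder_eq, h.2,
    Finset.card_image_of_injective _ he, uniformOn_univ, Measure.count_singleton]
  simp [ENNReal.inv_pow]

end IsUniformProduct

namespace SCA

variable {Q R : Type*} [MeasurableSpace Q] [MeasurableSpace R] [MeasurableSingletonClass R]

lemma measurable_F [Finite R] (A : SCA Q R) (c : ℤ → Q) : Measurable (A.F c) :=
  measurable_pi_lambda _ fun z ↦
    (measurable_of_finite (A.f fun v ↦ c (z + v))).comp (by fun_prop)

lemma map_F_apply_eq_map_uniformOn_univ [Fintype R] (A : SCA Q R) {ν : Measure (ℤ → R)}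
    (h : IsUniformProduct ν) (c : ℤ → Q) (z : ℤ) :
    ν.map (fun s ↦ A.F c s z) = (uniformOn Set.univ).map (A.f fun v ↦ c (z + v)) := by
  have shift_injective : Function.Injective fun v : A.V' ↦ z + (v : ℤ) :=
    (add_right_injective z).comp Subtype.val_injective
  rw [← h.map_comp_eq_uniformOn_univ shift_injective,
    Measure.map_map (measurable_of_finite _) (by fun_prop)]
  rfl

end SCA

theorem stmt15_general {Q R1 R2 : Type*} [MeasurableSpace Q] [MeasurableSingletonClass Q]
    [Fintype R1] [MeasurableSpace R1] [MeasurableSingletonClass R1]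
    [Fintype R2] [MeasurableSpace R2] [MeasurableSingletonClass R2]
    (A1 : SCA Q R1) (A2 : SCA Q R2) {c1 c2 : ℤ → Q} {s s' : ℤ → R1}
    (hne : A1.F c1 s ≠ A1.F c1 s') {ν1 : Measure (ℤ → R1)} {ν2 : Measure (ℤ → R2)}
    (h1 : IsUniformProduct ν1) (h2 : IsUniformProduct ν2)
    (heq : ν1.map (A1.F c1) = ν2.map (A2.F c2)) :
    ∃ p : ℕ, p.Prime ∧ p ∣ Fintype.card R1 ∧ p ∣ Fintype.card R2 := by
  obtain ⟨z, hz⟩ := Function.ne_iff.mp hne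
  have cell_law_eq : (uniformOn Set.univ).map (A1.f fun v ↦ c1 (z + v)) =
      (uniformOn Set.univ).map (A2.f fun v ↦ c2 (z + v)) := by
    rw [← A1.map_F_apply_eq_map_uniformOn_univ h1, ← A2.map_F_apply_eq_map_uniformOn_univ h2]
    have := congrArg (Measure.map (· z)) heq
    rwa [Measure.map_map (measurable_pi_apply z) (A1.measurable_F c1),
      Measure.map_map (measurable_pi_apply z) (A2.measurable_F c2)] at this
  have : Nonempty R2 := h2.nonempty_alphabet
  have not_coprime_pow := not_coprime_card_of_map_uniformOn_univ_eq
    (a := fun v : A1.V' ↦ s (z + v)) (b := fun v : A1.V' ↦ s' (z + v)) hz cell_law_eq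
  rw [Fintype.card_fun, Fintype.card_fun] at not_coprime_pow
  exact Nat.Prime.not_coprime_iff_dvd.mp (mt (Nat.Coprime.pow _ _) not_coprime_pow)

/-- If two non-deterministic SCA with the same state set have the same stochastic global
function, then the cardinalities of their random alphabets share a prime factor. -/
theorem stmt15 {Q R1 R2 : Type*}
    [Fintype Q] [Nonempty Q] [MeasurableSpace Q] [MeasurableSingletonClass Q]
    [Fintype R1] [Nonempty R1] [MeasurableSpace R1] [MeasurableSingletonClass R1]
    [Fintype R2] [Nonempty R2] [MeasurableSpace R2] [MeasurableSingletonClass R2]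
    (A1 : SCA Q R1) (A2 : SCA Q R2)
    (hnd1 : ∃ (c : ℤ → Q) (s s' : ℤ → R1), A1.F c s ≠ A1.F c s')
    (hnd2 : ∃ (c : ℤ → Q) (s s' : ℤ → R2), A2.F c s ≠ A2.F c s')
    (ν1 : Measure (ℤ → R1)) (ν2 : Measure (ℤ → R2))
    (h1 : IsUniformProduct ν1) (h2 : IsUniformProduct ν2)
    (heq : ∀ c : ℤ → Q, ν1.map (A1.F c) = ν2.map (A2.F c)) :
    ∃ p : ℕ, p.Prime ∧ p ∣ Fintype.card R1 ∧ p ∣ Fintype.card R2 := by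
  obtain ⟨c, s, s', hne⟩ := hnd1
  exact stmt15_general A1 A2 hne h1 h2 (heq c)
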